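/- With c* := (7√7 − 17)/27, the limit as n → ∞ of (1/n)·sup{ Q(x,y) : x ∈ ℝ^{n+1} with strictly positive entries, y ∈ ℝ^n with strictly positive entries } equals c*. -/

import Mathlib

/-!
Put `z = (√7 - 2) / 3`, the positive root of `3 z² + 4 z = 1`; then the constant is
`c = z² + z³`. Write `A₁ = M₁(x) - M₁(y)`, `A₂ = M₂(y) - M₂(x)`, `A₃ = M₃(x) + M₃(y)`.

Upper bound (`numerator_le`). For `t ≥ 0` the polynomials `y (y - t)²` and
`x³ + 2 t x² - t² x + 2 c t³ = (x - z t)² (x + (2 + 2 z) t)` are nonnegative on `[0, ∞)`. Summing them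
over all entries, with `x` of length `m`, gives `A₃ ≥ 2 t A₂ + t² A₁ - 2 c m t³`. If `A₁ > 0`, the
choice `t = A₁ / (2 c m)` turns this into `A₁ A₂ ≤ c m A₃`. The case `A₁ < 0` follows by exchanging
`x` and `y`, so `Q ≤ c (n + 1)` always.

Lower bound (`tendsto_Q_test`). The equality cases of the two polynomial inequalities at `t = 1` are
`x = z` and `y ∈ {0, 1}`. Accordingly take all entries of `x` equal to `z`, a proportion
`θ = 2 z² + z³` of the entries of `y` equal to `1`, and the remaining entries equal to
`1 / (n + 1)`, a positive substitute for `0`. Then `Q / n` tends to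
`(z - θ) (θ - z²) / (z³ + θ) = c`.
-/

open Finset Filter

/-- The quotient `Q(x,y)` of differences of power sums, for vectors of possibly
different lengths. -/
noncomputable def Q {n m : ℕ} (x : Fin n → ℝ) (y : Fin m → ℝ) : ℝ :=
  ((∑ i, x i - ∑ i, y i) * (∑ i, (y i)^2 - ∑ i, (x i)^2)) /
    (∑ i, (x i)^3 + ∑ i, (y i)^3)

/-- The positive root of `3 z² + 4 z = 1`. -/
noncomputable def zz : ℝ := (Real.sqrt 7 - 2) / 3

lemma zz_eq : 3 * zz ^ 2 + 4 * zz = 1 := by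
  have h : Real.sqrt 7 ^ 2 = 7 := Real.sq_sqrt (by norm_num)
  unfold zz
  linear_combination h / 3

lemma zz_pos : 0 < zz := by
  have h : (2 : ℝ) < Real.sqrt 7 := Real.lt_sqrt_of_sq_lt (by norm_num)
  unfold zz
  linarith

lemma zz_lt : zz < 1 / 4 := by
  nlinarith [zz_eq, zz_pos, sq_pos_of_pos zz_pos]

lemma const_eq : (7 * Real.sqrt 7 - 17) / 27 = zz ^ 2 + zz ^ 3 := by
  have h : Real.sqrt 7 = 3 * zz + 2 := by unfold zz; ring
  rw [h]
  linear_combination (1 / 9 - zz / 3) * zz_eq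

lemma sum_bound_x {m : ℕ} (x : Fin m → ℝ) (hx : ∀ i, 0 < x i) {t : ℝ} (ht : 0 ≤ t) :
    0 ≤ ∑ i, x i ^ 3 + 2 * t * ∑ i, x i ^ 2 - t ^ 2 * ∑ i, x i
      + 2 * (zz ^ 2 + zz ^ 3) * m * t ^ 3 := by
  have key : ∀ i, 0 ≤ x i ^ 3 + 2 * t * x i ^ 2 - t ^ 2 * x i
      + 2 * (zz ^ 2 + zz ^ 3) * t ^ 3 := by
    intro i
    have h1 : 0 ≤ (x i - zz * t) ^ 2 * (x i + (2 + 2 * zz) * t) := by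
      have := hx i
      have := zz_pos
      positivity
    have h2 : (x i - zz * t) ^ 2 * (x i + (2 + 2 * zz) * t) = x i ^ 3 + 2 * t * x i ^ 2
        - t ^ 2 * x i + 2 * (zz ^ 2 + zz ^ 3) * t ^ 3 := by
      linear_combination (-t ^ 2 * x i) * zz_eq
    linarith
  have h := Finset.sum_nonneg (s := Finset.univ) (fun i _ => key i)
  simp only [Finset.sum_add_distrib, Finset.sum_sub_distrib, ← Finset.mul_sum,
    Finset.sum_const, Finset.card_univ, Fintype.card_fin, nsmul_eq_mul] at h
  linarith

lemma sum_bound_y {m : ℕ} (y : Fin m → ℝ) (hy : ∀ i, 0 < y i) (t : ℝ) :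
    0 ≤ ∑ i, y i ^ 3 - 2 * t * ∑ i, y i ^ 2 + t ^ 2 * ∑ i, y i := by
  have key : ∀ i, 0 ≤ y i ^ 3 - 2 * t * y i ^ 2 + t ^ 2 * y i := by
    intro i
    have h1 : 0 ≤ y i * (y i - t) ^ 2 := mul_nonneg (hy i).le (sq_nonneg _)
    linarith
  have h := Finset.sum_nonneg (s := Finset.univ) (fun i _ => key i)
  simpa only [Finset.sum_add_distrib, Finset.sum_sub_distrib, ← Finset.mul_sum] using h

/-- The sharp inequality between the power sums; it involves only the length of `x`, the vector
with the larger sum. -/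
lemma numerator_le {m k : ℕ} (x : Fin m → ℝ) (y : Fin k → ℝ) (hx : ∀ i, 0 < x i)
    (hy : ∀ i, 0 < y i) (h : ∑ i, y i < ∑ i, x i) :
    (∑ i, x i - ∑ i, y i) * (∑ i, (y i)^2 - ∑ i, (x i)^2) ≤
      (zz ^ 2 + zz ^ 3) * m * (∑ i, (x i)^3 + ∑ i, (y i)^3) := by
  have hm : 0 < m := by
    rcases Nat.eq_zero_or_pos m with rfl | hm
    · have : 0 ≤ ∑ i, y i := Finset.sum_nonneg fun i _ => (hy i).le
      simp at h
      linarith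
    · exact hm
  have hC : 0 < (zz ^ 2 + zz ^ 3) * m := by
    have := zz_pos
    positivity
  set C := (zz ^ 2 + zz ^ 3) * m with hCdef
  obtain ⟨t, ht⟩ : ∃ t, ∑ i, x i - ∑ i, y i = 2 * C * t :=
    ⟨(∑ i, x i - ∑ i, y i) / (2 * C), by field_simp⟩
  have ht0 : 0 ≤ t := by
    by_contra! hneg
    nlinarith
  have h1 := sum_bound_x x hx ht0
  have h2 := sum_bound_y y hy t
  have h3 : 2 * t * (∑ i, (y i)^2 - ∑ i, (x i)^2) ≤ ∑ i, (x i)^3 + ∑ i, (y i)^3 := by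
    have h4 : t ^ 2 * (∑ i, x i - ∑ i, y i) = t ^ 2 * (2 * C * t) := by rw [ht]
    rw [hCdef] at h4
    linarith
  rw [ht]
  nlinarith [mul_le_mul_of_nonneg_left h3 hC.le]

lemma Q_le {n : ℕ} (x : Fin (n + 1) → ℝ) (y : Fin n → ℝ) (hx : ∀ i, 0 < x i)
    (hy : ∀ i, 0 < y i) : Q x y ≤ (zz ^ 2 + zz ^ 3) * (n + 1) := by
  have hc : 0 < zz ^ 2 + zz ^ 3 := by
    have := zz_pos
    positivity
  have hX : 0 < ∑ i, (x i)^3 :=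
    Finset.sum_pos (fun i _ => pow_pos (hx i) 3) Finset.univ_nonempty
  have hY : 0 ≤ ∑ i, (y i)^3 := Finset.sum_nonneg fun i _ => (pow_pos (hy i) 3).le
  unfold Q
  rw [div_le_iff₀ (by linarith)]
  rcases lt_trichotomy (∑ i, y i) (∑ i, x i) with h | h | h
  · have := numerator_le x y hx hy h
    push_cast at this
    exact this
  · rw [h, sub_self, zero_mul]
    positivity
  · have := numerator_le y x hy hx h
    nlinarith [mul_nonneg hc.le (add_nonneg hX.le hY)]

lemma sum_ite_lt {n k : ℕ} (hk : k ≤ n) (a b : ℝ) :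
    ∑ i : Fin n, (if (i : ℕ) < k then a else b) = k * a + ((n : ℝ) - k) * b := by
  obtain ⟨m, rfl⟩ := Nat.exists_eq_add_of_le hk
  rw [Fin.sum_univ_add]
  simp

/-- The number of entries of the extremal `y` that equal `1`. -/
noncomputable def kk (n : ℕ) : ℕ := ⌊(2 * zz ^ 2 + zz ^ 3) * (n : ℝ)⌋₊

/-- The asymptotically extremal `y`: `kk n` ones, and all other entries `1 / (n + 1)`. -/
noncomputable def yy (n : ℕ) : Fin n → ℝ :=
  fun i => if (i : ℕ) < kk n then 1 else 1 / ((n : ℝ) + 1)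

lemma kk_le (n : ℕ) : kk n ≤ n := by
  have h1 := zz_pos
  have h2 := zz_lt
  have h3 : 2 * zz ^ 2 + zz ^ 3 ≤ 1 := by
    nlinarith [zz_eq, sq_pos_of_pos h1, mul_pos h1 (sq_pos_of_pos h1)]
  apply Nat.floor_le_of_le
  exact mul_le_of_le_one_left (Nat.cast_nonneg n) h3

lemma sum_yy (n p : ℕ) :
    ∑ i, yy n i ^ p = kk n + ((n : ℝ) - kk n) * (1 / ((n : ℝ) + 1)) ^ p := by
  have := sum_ite_lt (kk_le n) 1 ((1 / ((n : ℝ) + 1)) ^ p)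
  rw [mul_one] at this
  rw [← this]
  refine Finset.sum_congr rfl fun i _ => ?_
  unfold yy
  split_ifs <;> simp

lemma tendsto_kk :
    Tendsto (fun n : ℕ => (kk n : ℝ) / n) atTop (nhds (2 * zz ^ 2 + zz ^ 3)) := by
  have h1 := zz_pos
  exact (tendsto_nat_floor_mul_div_atTop (by positivity)).comp tendsto_natCast_atTop_atTop

lemma tendsto_sum_yy (p : ℕ) (hp : p ≠ 0) :
    Tendsto (fun n : ℕ => (∑ i, yy n i ^ p) / n) atTop (nhds (2 * zz ^ 2 + zz ^ 3)) := by
  have he : Tendsto (fun n : ℕ => (1 / ((n : ℝ) + 1)) ^ p) atTop (nhds 0) := by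
    simpa [hp] using (tendsto_one_div_add_atTop_nhds_zero_nat (𝕜 := ℝ)).pow p
  have h := tendsto_kk.add ((tendsto_kk.const_sub 1).mul he)
  rw [mul_zero, add_zero] at h
  refine h.congr' ?_
  filter_upwards [eventually_gt_atTop 0] with n hn
  have : (n : ℝ) ≠ 0 := by positivity
  rw [sum_yy]
  field_simp

lemma tendsto_sum_zz (p : ℕ) :
    Tendsto (fun n : ℕ => (∑ _i : Fin (n + 1), zz ^ p) / (n : ℝ)) atTop (nhds (zz ^ p)) := by
  have h := ((tendsto_one_div_atTop_nhds_zero_nat (𝕜 := ℝ)).const_add 1).mul_const (zz ^ p)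
  rw [add_zero, one_mul] at h
  refine h.congr' ?_
  filter_upwards [eventually_gt_atTop 0] with n hn
  have : (n : ℝ) ≠ 0 := by positivity
  simp
  field_simp

lemma tendsto_Q_test :
    Tendsto (fun n : ℕ => (1 / (n : ℝ)) * Q (fun _ : Fin (n + 1) => zz) (yy n)) atTop
      (nhds (zz ^ 2 + zz ^ 3)) := by
  have h1 := zz_pos
  have hne : zz ^ 3 + (2 * zz ^ 2 + zz ^ 3) ≠ 0 := by positivity
  have h := ((((tendsto_sum_zz 1).sub (tendsto_sum_yy 1 one_ne_zero)).mul
    ((tendsto_sum_yy 2 two_ne_zero).sub (tendsto_sum_zz 2))).div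
    ((tendsto_sum_zz 3).add (tendsto_sum_yy 3 three_ne_zero)) hne)
  have hval : (zz ^ 1 - (2 * zz ^ 2 + zz ^ 3)) * (2 * zz ^ 2 + zz ^ 3 - zz ^ 2) /
      (zz ^ 3 + (2 * zz ^ 2 + zz ^ 3)) = zz ^ 2 + zz ^ 3 := by
    rw [div_eq_iff hne]
    linear_combination (-zz * (zz ^ 2 + zz ^ 3)) * zz_eq
  rw [hval] at h
  refine h.congr' ?_
  filter_upwards [eventually_gt_atTop 0] with n hn
  have hn' : (n : ℝ) ≠ 0 := by positivity
  have hpos : 0 < ∑ _i : Fin (n + 1), zz ^ 3 :=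
    Finset.sum_pos (fun i _ => pow_pos h1 3) Finset.univ_nonempty
  have hY : 0 ≤ ∑ i, yy n i ^ 3 := by
    refine Finset.sum_nonneg fun i _ => ?_
    unfold yy
    split_ifs <;> positivity
  have hD : ∑ _i : Fin (n + 1), zz ^ 3 + ∑ i, yy n i ^ 3 ≠ 0 := by positivity
  unfold Q
  simp only [Pi.div_apply, pow_one]
  rw [← sub_div, ← sub_div, ← add_div]
  field_simp

theorem stmt_3 :
    Tendsto (fun n : ℕ =>
      (1 / (n : ℝ)) *
        sSup {q : ℝ | ∃ (x : Fin (n + 1) → ℝ) (y : Fin n → ℝ),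
          (∀ i, 0 < x i) ∧ (∀ i, 0 < y i) ∧ q = Q x y})
      atTop (nhds ((7 * Real.sqrt 7 - 17) / 27)) := by
  rw [const_eq]
  have hup : Tendsto (fun n : ℕ => (1 / (n : ℝ)) * ((zz ^ 2 + zz ^ 3) * (n + 1))) atTop
      (nhds (zz ^ 2 + zz ^ 3)) := by
    have h := ((tendsto_one_div_atTop_nhds_zero_nat (𝕜 := ℝ)).const_add 1).mul_const
      (zz ^ 2 + zz ^ 3)
    rw [add_zero, one_mul] at h
    refine h.congr' ?_
    filter_upwards [eventually_gt_atTop 0] with n hn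
    have : (n : ℝ) ≠ 0 := by positivity
    field_simp
  have hmem : ∀ n : ℕ, Q (fun _ : Fin (n + 1) => zz) (yy n) ∈
      {q : ℝ | ∃ (x : Fin (n + 1) → ℝ) (y : Fin n → ℝ),
          (∀ i, 0 < x i) ∧ (∀ i, 0 < y i) ∧ q = Q x y} := by
    intro n
    refine ⟨_, _, fun _ => zz_pos, fun i => ?_, rfl⟩
    unfold yy
    split_ifs <;> positivity
  refine tendsto_of_tendsto_of_tendsto_of_le_of_le tendsto_Q_test hup ?_ ?_
  · intro n
    refine mul_le_mul_of_nonneg_left (le_csSup ?_ (hmem n)) (by positivity)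
    refine ⟨(zz ^ 2 + zz ^ 3) * (n + 1), ?_⟩
    rintro q ⟨x, y, hx, hy, rfl⟩
    exact Q_le x y hx hy
  · intro n
    refine mul_le_mul_of_nonneg_left (csSup_le ⟨_, hmem n⟩ ?_) (by positivity)
    rintro q ⟨x, y, hx, hy, rfl⟩
    exact Q_le x y hx hy
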